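/- Let N be a finite length graded S-module, S = k[X_0,...,X_n], and let P_k(N) be the sheafification of the k-th syzygy module of N from a minimal free resolution. Then H^k_*(P_k(N)) = N and H^i_*(P_k(N)) = 0 for all i with 1 ≤ i ≤ n-1, i ≠ k. -/

import Mathlib

/-!
Background setup (the paper works on projective space `ℙⁿ` over a field `K`):
we encode a coherent sheaf on `ℙⁿ_K` by a module `M` over the homogeneous coordinate
ring `S = K[X₀,…,Xₙ]` (namely `M = Γ_*` of the sheaf), and the intermediate cohomology
module `H^i_*(F) = ⊕_ν H^i(ℙⁿ, F(ν))` (for `i ≥ 1`) by the local cohomology module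
`H^{i+1}_𝔪(M)` at the irrelevant maximal ideal `𝔪 = (X₀,…,Xₙ)`, to which it is
canonically isomorphic.
-/

open CategoryTheory TensorProduct

noncomputable section

/-- The homogeneous coordinate ring `S = K[X₀,…,Xₙ]` of `ℙⁿ`. -/
abbrev PolyS (K : Type) [Field K] (n : ℕ) : Type := MvPolynomial (Fin (n+1)) K

variable (K : Type) [Field K] (n : ℕ)

/-- The irrelevant maximal ideal `𝔪 = (X₀,…,Xₙ)` of `S`. -/
def irrel : Ideal (PolyS K n) := Ideal.span (Set.range MvPolynomial.X)

/-- `H^i_*` of the sheaf on `ℙⁿ` associated to the `S`-module `M`, encoded (for `i ≥ 1`)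
as the local cohomology module `H^{i+1}_𝔪(M)`. -/
def Hstar (i : ℕ) (M : Type) [AddCommGroup M] [Module (PolyS K n) M] :
    ModuleCat (PolyS K n) :=
  (localCohomology (irrel K n) (i+1)).obj (ModuleCat.of (PolyS K n) M)

/-- `M` is (the module of sections `Γ_*` of) an algebraic vector bundle on `ℙⁿ`:
finitely generated, depth `≥ 2` at `𝔪` (i.e. `H⁰_𝔪(M) = H¹_𝔪(M) = 0`, so `M = Γ_*(M̃)`),
and locally free at every prime other than the irrelevant ideal. -/
structure IsBundleModule (M : Type) [AddCommGroup M] [Module (PolyS K n) M] : Prop where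
  finite : Module.Finite (PolyS K n) M
  h0 : Subsingleton ((localCohomology (irrel K n) 0).obj (ModuleCat.of (PolyS K n) M))
  h1 : Subsingleton ((localCohomology (irrel K n) 1).obj (ModuleCat.of (PolyS K n) M))
  locFree : ∀ p : PrimeSpectrum (PolyS K n), p.asIdeal ≠ irrel K n →
    Module.Free (Localization.AtPrime p.asIdeal) (LocalizedModule p.asIdeal.primeCompl M)

/-- `M` represents a vector bundle of rank two on `ℙⁿ`. -/
structure IsRankTwoBundleModule (M : Type) [AddCommGroup M] [Module (PolyS K n) M]
    extends IsBundleModule K n M : Prop where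
  rank2 : ∀ p : PrimeSpectrum (PolyS K n), p.asIdeal ≠ irrel K n →
    Module.rank (Localization.AtPrime p.asIdeal) (LocalizedModule p.asIdeal.primeCompl M) = 2

/-- A finite length module which is moreover supported at the irrelevant ideal: the
(ungraded avatar of the) notion of a *graded* `S`-module of finite length. -/
def IsGradedFiniteLength (N : Type) [AddCommGroup N] [Module (PolyS K n) N] : Prop :=
  IsFiniteLength (PolyS K n) N ∧
    ∃ c : ℕ, (irrel K n) ^ c ≤ Module.annihilator (PolyS K n) N

/-- A minimal graded free resolution `⋯ → L₁ → L₀ → N → 0` of an `S`-module `N`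
(minimality: all differentials have entries in the maximal ideal `𝔪`).
Here `d i : L (i+1) → L i` and `P_k(N)`, the `k`-th syzygy module, is `range (d k)`,
i.e. the image of `f_{k+1} : L_{k+1} → L_k`. -/
structure MinimalResolution (N : Type) [AddCommGroup N] [Module (PolyS K n) N] where
  L : ℕ → Type
  [addCommGroup : ∀ i, AddCommGroup (L i)]
  [module : ∀ i, Module (PolyS K n) (L i)]
  free : ∀ i, Module.Free (PolyS K n) (L i)
  finite : ∀ i, Module.Finite (PolyS K n) (L i)
  d : ∀ i : ℕ, L (i+1) →ₗ[PolyS K n] L i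
  aug : L 0 →ₗ[PolyS K n] N
  aug_surjective : Function.Surjective aug
  exact0 : LinearMap.range (d 0) = LinearMap.ker aug
  exact : ∀ i : ℕ, LinearMap.range (d (i+1)) = LinearMap.ker (d i)
  minimal : ∀ i : ℕ, LinearMap.range (d i) ≤ (irrel K n) • (⊤ : Submodule (PolyS K n) (L i))
  minimal0 : LinearMap.ker aug ≤ (irrel K n) • (⊤ : Submodule (PolyS K n) (L 0))

attribute [instance] MinimalResolution.addCommGroup MinimalResolution.module

/-!
Local cohomology is the direct limit of `Ext^n(R ⧸ J ^ t, -)`, so it inherits the vanishing and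
dimension-shifting properties of `Ext`. The `n + 1` variables form a regular sequence on every free
module `L`, hence `H^i_𝔪(L) = 0` for `i ≤ n`. Along `0 → P_{k+1} → L_{k+1} → P_k → 0` and
`0 → P_0 → L_0 → N → 0` this gives `H^{a+k+1}_𝔪(P_k) ≅ H^a_𝔪(N)` in the range `a + k + 1 ≤ n`, and
`H^i_𝔪(P_k) = 0` for `i ≤ k`. Finally `N` is `𝔪`-power torsion, so `H^0_𝔪(N) = N`, while the higher
local cohomology of `N` vanishes: over a Noetherian ring a torsion module embeds in a torsion
injective module with torsion quotient, and homomorphisms from `R ⧸ J ^ t` lift along surjections of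
torsion modules after enlarging `t`.
-/

section ExtComparison

open Limits Opposite

universe v

variable {R : Type*} [CommRing R] {C : Type*} [Category.{v} C] [Abelian C] [Linear R C]

variable (R) in
/-- The cochain map `Hom(P, Y) ⟶ Hom(P', Y)` given by precomposition with a chain map `P' ⟶ P`. -/
def linearYonedaMap {P P' : ChainComplex C ℕ} (φ : P' ⟶ P) (Y : C) :
    P.linearYonedaObj R Y ⟶ P'.linearYonedaObj R Y :=
  (HomologicalComplex.unopFunctor _ _).map
    ((((linearYoneda R C).obj Y).rightOp.mapHomologicalComplex _).map φ).op

lemma isoExt_hom_naturality [EnoughProjectives C] {X X' : C} {P : ProjectiveResolution X}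
    {P' : ProjectiveResolution X'} {g : X' ⟶ X} (φ : ProjectiveResolution.Hom P' P g) (n : ℕ)
    (Y : C) :
    ((Ext R C n).map g.op).app Y ≫ (P'.isoExt n Y).hom =
      (P.isoExt n Y).hom ≫ HomologicalComplex.homologyMap (linearYonedaMap R φ.hom Y) n := by
  let F := ((linearYoneda R C).obj Y).rightOp
  have h_homology : CommSq
      (HomologicalComplex.homologyUnop ((F.mapHomologicalComplex _).obj P.complex) n).hom
      (HomologicalComplex.homologyMap (linearYonedaMap R φ.hom Y) n)
      ((F.mapHomologicalComplex _ ⋙ HomologicalComplex.homologyFunctor _ _ n).map φ.hom).unop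
      (HomologicalComplex.homologyUnop ((F.mapHomologicalComplex _).obj P'.complex) n).hom :=
    ⟨congrArg Quiver.Hom.unop
      (HomologicalComplex.homologyOp_hom_naturality (linearYonedaMap R φ.hom Y) n)⟩
  have h_derived : CommSq (P.isoLeftDerivedObj F n).inv.unop ((F.leftDerived n).map g).unop
      ((F.mapHomologicalComplex _ ⋙ HomologicalComplex.homologyFunctor _ _ n).map φ.hom).unop
      (P'.isoLeftDerivedObj F n).inv.unop :=
    ⟨(congrArg Quiver.Hom.unop (P'.isoLeftDerivedObj_inv_naturality g P φ.hom
      (by simpa using φ.hom_f_zero_comp_π_f_zero) F n)).symm⟩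
  exact (h_derived.horiz_comp h_homology.horiz_inv).w.symm

variable {X : C} (P : ProjectiveResolution X) (n : ℕ) (Y : C)

/-- The elements of degree `n` cocycles of `Hom(P, Y)`, regarded as morphisms `Pₙ ⟶ Y`. -/
def cocycleHom : (P.complex.linearYonedaObj R Y).cycles n →ₗ[R] (P.complex.X n ⟶ Y) :=
  ((P.complex.linearYonedaObj R Y).iCycles n).hom

variable {P n Y}

lemma d_comp_cocycleHom (z : (P.complex.linearYonedaObj R Y).cycles n) :
    P.complex.d (n + 1) n ≫ cocycleHom P n Y z = 0 :=
  congr($((P.complex.linearYonedaObj R Y).iCycles_d n (n + 1)) z)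

lemma cocycleHom_injective : Function.Injective (cocycleHom (R := R) P n Y) :=
  (ModuleCat.mono_iff_injective ((P.complex.linearYonedaObj R Y).iCycles n)).1 inferInstance

lemma cocycleHom_toCycles (f : P.complex.X n ⟶ Y) :
    cocycleHom P (n + 1) Y ((P.complex.linearYonedaObj R Y).toCycles n (n + 1) f) =
      P.complex.d (n + 1) n ≫ f :=
  congr($((P.complex.linearYonedaObj R Y).toCycles_i n (n + 1)) f)

lemma exists_cocycleHom_eq {f : P.complex.X n ⟶ Y} (hf : P.complex.d (n + 1) n ≫ f = 0) :
    ∃ z, cocycleHom (R := R) P n Y z = f := by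
  let K := P.complex.linearYonedaObj R Y
  have h_exact : (ShortComplex.mk (K.iCycles n) (K.d n (n + 1)) (by simp)).Exact :=
    ShortComplex.exact_of_f_is_kernel _ (K.cyclesIsKernel n (n + 1) (by simp))
  exact (ShortComplex.moduleCat_exact_iff _).1 h_exact f hf

lemma cocycleHom_cyclesMap {X' : C} {P' : ProjectiveResolution X'} {g : X' ⟶ X}
    (φ : ProjectiveResolution.Hom P' P g) (z : (P.complex.linearYonedaObj R Y).cycles n) :
    cocycleHom P' n Y (HomologicalComplex.cyclesMap (linearYonedaMap R φ.hom Y) n z) =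
      φ.hom.f n ≫ cocycleHom P n Y z :=
  congr($(HomologicalComplex.cyclesMap_i (linearYonedaMap R φ.hom Y) n) z)

variable [HasExt.{v} C] (P n Y)

/-- The map sending a cocycle of `Hom(P, Y)` to its class in `Ext`, for `P` a projective
resolution. -/
def cyclesToExt :
    (P.complex.linearYonedaObj R Y).cycles n ⟶ ModuleCat.of R (Abelian.Ext X Y n) :=
  ModuleCat.ofHom
    { toFun z := P.extMk (cocycleHom P n Y z) (n + 1) rfl (d_comp_cocycleHom z)
      map_add' z w := by
        rw [P.add_extMk]
        congr 1
        exact map_add _ z w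
      map_smul' r z := by
        rw [RingHom.id_apply, Abelian.Ext.smul_eq_comp_mk₀, P.extMk_comp_mk₀]
        congr 1
        exact (map_smul (cocycleHom P n Y) r z).trans
          (by rw [Linear.comp_smul, Category.comp_id]; rfl) }

variable {P n Y}

lemma cyclesToExt_apply (z : (P.complex.linearYonedaObj R Y).cycles n) :
    cyclesToExt P n Y z = P.extMk (cocycleHom P n Y z) (n + 1) rfl (d_comp_cocycleHom z) := rfl

lemma cyclesToExt_surjective : Function.Surjective (cyclesToExt (R := R) P n Y) := by
  intro e
  obtain ⟨f, hf, rfl⟩ := P.extMk_surjective e (n + 1) rfl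
  obtain ⟨z, rfl⟩ := exists_cocycleHom_eq (R := R) hf
  exact ⟨z, rfl⟩

lemma exact_toCycles_cyclesToExt :
    Function.Exact ((P.complex.linearYonedaObj R Y).toCycles n (n + 1))
      (cyclesToExt (R := R) P (n + 1) Y) := by
  intro z
  rw [cyclesToExt_apply, P.extMk_eq_zero_iff _ _ _ _ n rfl]
  constructor
  · rintro ⟨f, hf⟩
    exact ⟨f, cocycleHom_injective ((cocycleHom_toCycles f).trans hf)⟩
  · rintro ⟨f, rfl⟩
    exact ⟨f, (cocycleHom_toCycles f).symm⟩

variable (P n Y)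

/-- The comparison of the cohomology of `Hom(P, Y)`, for `P` a projective resolution of `X`, with
`Abelian.Ext X Y`, in positive degrees. -/
def homologyIsoExt : (P.complex.linearYonedaObj R Y).homology (n + 1) ≅
    ModuleCat.of R (Abelian.Ext X Y (n + 1)) :=
  have h_exact : (ShortComplex.mk _ (cyclesToExt (R := R) P (n + 1) Y)
      (ModuleCat.hom_ext exact_toCycles_cyclesToExt.linearMap_comp_eq_zero)).Exact :=
    (ShortComplex.ShortExact.moduleCat_exact_iff_function_exact _).2 exact_toCycles_cyclesToExt
  have : Epi (cyclesToExt (R := R) P (n + 1) Y) :=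
    (ModuleCat.epi_iff_surjective _).2 cyclesToExt_surjective
  ((P.complex.linearYonedaObj R Y).homologyIsCokernel n (n + 1) (by simp)).coconePointUniqueUpToIso
    h_exact.gIsCokernel

lemma homologyπ_homologyIsoExt_hom :
    (P.complex.linearYonedaObj R Y).homologyπ (n + 1) ≫ (homologyIsoExt P n Y).hom =
      cyclesToExt P (n + 1) Y :=
  ((P.complex.linearYonedaObj R Y).homologyIsCokernel n (n + 1)
    (by simp)).comp_coconePointUniqueUpToIso_hom _ WalkingParallelPair.one

variable (R) in
/-- The functor `Ext(-, Y)`, in terms of `Abelian.Ext`. -/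
def contravariantExt : Cᵒᵖ ⥤ ModuleCat.{v} R where
  obj X := ModuleCat.of R (Abelian.Ext X.unop Y n)
  map g := ModuleCat.ofHom ((Abelian.Ext.mk₀ g.unop).precompOfLinear R Y (zero_add n))
  map_id X := by
    ext e
    exact Abelian.Ext.mk₀_id_comp e
  map_comp f g := by
    ext e
    exact (Abelian.Ext.mk₀_comp_mk₀_assoc g.unop f.unop e).symm

variable {P n Y}

lemma cyclesToExt_naturality {X' : C} {P' : ProjectiveResolution X'} {g : X' ⟶ X}
    (φ : ProjectiveResolution.Hom P' P g) :
    HomologicalComplex.cyclesMap (linearYonedaMap R φ.hom Y) n ≫ cyclesToExt P' n Y =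
      cyclesToExt P n Y ≫
        ModuleCat.ofHom ((Abelian.Ext.mk₀ g).precompOfLinear R Y (zero_add n)) := by
  ext z
  refine Eq.trans ?_
    (ProjectiveResolution.mk₀_comp_extMk _ (n + 1) rfl (d_comp_cocycleHom z) φ).symm
  change P'.extMk (cocycleHom P' n Y _) (n + 1) rfl (d_comp_cocycleHom _) = _
  congr 1
  exact cocycleHom_cyclesMap φ z

lemma homologyIsoExt_hom_naturality {X' : C} {P' : ProjectiveResolution X'} {g : X' ⟶ X}
    (φ : ProjectiveResolution.Hom P' P g) :
    HomologicalComplex.homologyMap (linearYonedaMap R φ.hom Y) (n + 1) ≫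
        (homologyIsoExt P' n Y).hom =
      (homologyIsoExt P n Y).hom ≫
        ModuleCat.ofHom ((Abelian.Ext.mk₀ g).precompOfLinear R Y (zero_add (n + 1))) := by
  rw [← cancel_epi ((P.complex.linearYonedaObj R Y).homologyπ (n + 1)),
    HomologicalComplex.homologyπ_naturality_assoc, homologyπ_homologyIsoExt_hom,
    ← Category.assoc, homologyπ_homologyIsoExt_hom, cyclesToExt_naturality]

variable (R n Y) in
/-- The comparison of the derived functor `Ext R C` with `Abelian.Ext`, as functors of the first
variable, in positive degrees. -/
def extFlipIso [EnoughProjectives C] :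
    (Ext R C (n + 1)).flip.obj Y ≅ contravariantExt R (n + 1) Y :=
  NatIso.ofComponents
    (fun X ↦ (projectiveResolution X.unop).isoExt (n + 1) Y ≪≫
      homologyIsoExt (projectiveResolution X.unop) n Y)
    (fun {X X'} g ↦ by
      let φ : ProjectiveResolution.Hom (projectiveResolution X'.unop)
          (projectiveResolution X.unop) g.unop :=
        ⟨ProjectiveResolution.lift g.unop _ _,
          by simpa using ProjectiveResolution.lift_commutes_zero g.unop _ _⟩
      have h_isoExt : CommSq _ _ _ _ := ⟨isoExt_hom_naturality (R := R) φ (n + 1) Y⟩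
      have h_homology : CommSq _ _ _ _ :=
        ⟨homologyIsoExt_hom_naturality (R := R) (n := n) (Y := Y) φ⟩
      exact (h_isoExt.vert_comp h_homology).w)

end ExtComparison

section LocalExt

open Limits Opposite

universe u

variable {R : Type u} [CommRing R] (J : Ideal R)

/-- The inverse system `t ↦ R ⧸ J ^ t`, with morphisms reversed. -/
abbrev quotientPowers : ℕᵒᵖᵒᵖ ⥤ (ModuleCat.{u} R)ᵒᵖ :=
  (localCohomology.ringModIdeals (localCohomology.idealPowersDiagram J)).op

/-- The direct limit of `Ext^n(R ⧸ J ^ t, Y)` over `t`: a model of the local cohomology module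
`H^n_J(Y)` built from `Abelian.Ext`, so that the long exact sequences for the latter apply to it. -/
def localExt (n : ℕ) (Y : ModuleCat.{u} R) : ModuleCat.{u} R :=
  colimit (quotientPowers J ⋙ contravariantExt R n Y)

/-- The structure map of the direct limit `localExt J n Y` at stage `t`. -/
def toLocalExt (n : ℕ) (Y : ModuleCat.{u} R) (t : ℕ) :
    Abelian.Ext (ModuleCat.of R (R ⧸ J ^ t)) Y n →ₗ[R] localExt J n Y :=
  (colimit.ι (quotientPowers J ⋙ contravariantExt R n Y) (op (op t))).hom

/-- Local cohomology in positive degrees, computed by `Abelian.Ext`. -/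
def localCohomologyIsoLocalExt (n : ℕ) (Y : ModuleCat.{u} R) :
    (localCohomology J (n + 1)).obj Y ≅ localExt J (n + 1) Y :=
  colimitObjIsoColimitCompEvaluation
      (localCohomology.diagram (localCohomology.idealPowersDiagram J) (n + 1)) Y ≪≫
    HasColimit.isoOfNatIso (Functor.isoWhiskerLeft (quotientPowers J) (extFlipIso R n Y))

variable {J} {n : ℕ} {Y : ModuleCat.{u} R}

lemma exists_toLocalExt_eq (x : localExt J n Y) : ∃ t e, toLocalExt J n Y t e = x := by
  have := preservesSmallestFilteredColimits_of_preservesFilteredColimits (forget (ModuleCat.{u} R))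
  obtain ⟨t, e, rfl⟩ := Concrete.colimit_exists_rep _ x
  exact ⟨t.unop.unop, e, rfl⟩

variable (J) in
/-- The projection `R ⧸ J ^ t' ⟶ R ⧸ J ^ t` for `t ≤ t'`. -/
abbrev powFactor {t t' : ℕ} (h : t ≤ t') :
    ModuleCat.of R (R ⧸ J ^ t') ⟶ ModuleCat.of R (R ⧸ J ^ t) :=
  ModuleCat.ofHom (Submodule.factor (Ideal.pow_le_pow_right h))

lemma toLocalExt_powFactor_comp {t t' : ℕ} (h : t ≤ t')
    (e : Abelian.Ext (ModuleCat.of R (R ⧸ J ^ t)) Y n) :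
    toLocalExt J n Y t' ((Abelian.Ext.mk₀ (powFactor J h)).comp e (zero_add n)) =
      toLocalExt J n Y t e :=
  congr($(colimit.w (quotientPowers J ⋙ contravariantExt R n Y) (homOfLE h).op.op) e)

lemma subsingleton_localExt_of_forall_exists_comp_eq_zero
    (h : ∀ t (e : Abelian.Ext (ModuleCat.of R (R ⧸ J ^ t)) Y n), ∃ t', ∃ ht : t ≤ t',
      (Abelian.Ext.mk₀ (powFactor J ht)).comp e (zero_add n) = 0) :
    Subsingleton (localExt J n Y) := by
  refine subsingleton_of_forall_eq 0 fun x ↦ ?_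
  obtain ⟨t, e, rfl⟩ := exists_toLocalExt_eq x
  obtain ⟨t', ht, he⟩ := h t e
  rw [← toLocalExt_powFactor_comp ht, he, map_zero]

/-- The connecting homomorphisms `Ext^n(-, S.X₃) ⟶ Ext^(n+1)(-, S.X₁)` of a short exact sequence. -/
def extConnecting {S : ShortComplex (ModuleCat.{u} R)} (hS : S.ShortExact) (n : ℕ) :
    contravariantExt R n S.X₃ ⟶ contravariantExt R (n + 1) S.X₁ where
  app X := ModuleCat.ofHom (hS.extClass.postcompOfLinear R X.unop rfl)
  naturality _ _ f := by
    ext x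
    exact Abelian.Ext.comp_assoc (Abelian.Ext.mk₀ f.unop) x hS.extClass (by lia) (by lia) (by lia)

lemma extConnecting_app_bijective {S : ShortComplex (ModuleCat.{u} R)} (hS : S.ShortExact)
    (X : (ModuleCat.{u} R)ᵒᵖ) (h : Subsingleton (Abelian.Ext X.unop S.X₂ n))
    (h' : Subsingleton (Abelian.Ext X.unop S.X₂ (n + 1))) :
    Function.Bijective ((extConnecting hS n).app X) := by
  refine ⟨(injective_iff_map_eq_zero _).2 fun a ha ↦ ?_, fun y ↦
    Abelian.Ext.covariant_sequence_exact₁ X.unop hS y (Subsingleton.elim _ _) rfl⟩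
  obtain ⟨b, rfl⟩ := Abelian.Ext.covariant_sequence_exact₃ X.unop hS a rfl ha
  rw [Subsingleton.elim b 0]
  exact Abelian.Ext.zero_comp ..

/-- Dimension shifting along a short exact sequence whose middle term has vanishing `Ext` groups. -/
def localExtShiftIso {S : ShortComplex (ModuleCat.{u} R)} (hS : S.ShortExact)
    (h : ∀ t, Subsingleton (Abelian.Ext (ModuleCat.of R (R ⧸ J ^ t)) S.X₂ n))
    (h' : ∀ t, Subsingleton (Abelian.Ext (ModuleCat.of R (R ⧸ J ^ t)) S.X₂ (n + 1))) :
    localExt J n S.X₃ ≅ localExt J (n + 1) S.X₁ :=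
  let connecting := Functor.whiskerLeft (quotientPowers J) (extConnecting hS n)
  have (t : ℕᵒᵖᵒᵖ) : IsIso (connecting.app t) :=
    (ConcreteCategory.isIso_iff_bijective _).2
      (extConnecting_app_bijective hS _ (h t.unop.unop) (h' t.unop.unop))
  have := NatIso.isIso_of_isIso_app connecting
  HasColimit.isoOfNatIso (asIso connecting)

lemma quotient_hom_ext {I : Ideal R} {f g : ModuleCat.of R (R ⧸ I) ⟶ Y}
    (h : f (1 : R ⧸ I) = g (1 : R ⧸ I)) : f = g :=
  ModuleCat.hom_ext <| Submodule.linearMap_qext _ <| LinearMap.ext_ring h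

lemma exists_hom_apply_one_eq {I : Ideal R} {y : Y} (hy : y ∈ Submodule.torsionBySet R Y I) :
    ∃ f : ModuleCat.of R (R ⧸ I) ⟶ Y, f (1 : R ⧸ I) = y :=
  ⟨ModuleCat.ofHom (Submodule.liftQ I (LinearMap.toSpanSingleton R Y y) fun r hr ↦
    (Submodule.mem_torsionBySet_iff _ _).1 hy ⟨r, hr⟩), one_smul R y⟩

lemma hom_apply_one_mem_torsionBySet {I : Ideal R} (f : ModuleCat.of R (R ⧸ I) ⟶ Y) :
    f (1 : R ⧸ I) ∈ Submodule.torsionBySet R Y I := by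
  rw [Submodule.mem_torsionBySet_iff]
  rintro ⟨r, hr⟩
  have hr' : r • (1 : R ⧸ I) = 0 := by
    rw [Algebra.smul_def, mul_one]
    exact Ideal.Quotient.eq_zero_iff_mem.2 hr
  exact (f.hom.map_smul r 1).symm.trans ((congrArg f hr').trans f.hom.map_zero)

/-- Evaluation at `1` identifies `Ext^0(R ⧸ I, Y)` with a submodule of `Y`. -/
def extZeroEval (I : Ideal R) (Y : ModuleCat.{u} R) :
    Abelian.Ext (ModuleCat.of R (R ⧸ I)) Y 0 →ₗ[R] Y :=
  LinearMap.applyₗ (1 : R ⧸ I) ∘ₗ (ModuleCat.homLinearEquiv (S := R)).toLinearMap ∘ₗ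
    (Abelian.Ext.linearEquiv₀ (R := R)).toLinearMap

lemma extZeroEval_mk₀ {I : Ideal R} (f : ModuleCat.of R (R ⧸ I) ⟶ Y) :
    extZeroEval I Y (Abelian.Ext.mk₀ f) = f (1 : R ⧸ I) :=
  congr(($(Abelian.Ext.linearEquiv₀.apply_symm_apply (R := R) f)).hom (1 : R ⧸ I))

variable (J Y) in
/-- The evaluations at `1`, as a cocone on the system defining `localExt J 0 Y`. -/
def extZeroEvalCocone : Cocone (quotientPowers J ⋙ contravariantExt R 0 Y) where
  pt := Y
  ι.app t := ModuleCat.ofHom (extZeroEval (J ^ t.unop.unop) Y)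
  ι.naturality t t' h := by
    ext e
    obtain ⟨f, rfl⟩ := Abelian.Ext.homEquiv₀.symm.surjective e
    refine (congrArg (extZeroEval _ Y)
      (Abelian.Ext.mk₀_comp_mk₀ ((quotientPowers J).map h).unop f)).trans ?_
    exact (extZeroEval_mk₀ _).trans (extZeroEval_mk₀ f).symm

variable (J Y) in
/-- Evaluation at `1` on `colim Hom(R ⧸ J ^ t, Y)`. -/
def localExtZeroEval : localExt J 0 Y ⟶ Y :=
  colimit.desc _ (extZeroEvalCocone J Y)

lemma localExtZeroEval_toLocalExt {t : ℕ} (e : Abelian.Ext (ModuleCat.of R (R ⧸ J ^ t)) Y 0) :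
    localExtZeroEval J Y (toLocalExt J 0 Y t e) = extZeroEval (J ^ t) Y e :=
  congr($(colimit.ι_desc (extZeroEvalCocone J Y) (op (op t))) e)

lemma extZeroEval_injective (I : Ideal R) : Function.Injective (extZeroEval I Y) := by
  intro a b h
  obtain ⟨f, rfl⟩ := Abelian.Ext.homEquiv₀.symm.surjective a
  obtain ⟨g, rfl⟩ := Abelian.Ext.homEquiv₀.symm.surjective b
  exact congrArg _ (quotient_hom_ext
    ((extZeroEval_mk₀ f).symm.trans (h.trans (extZeroEval_mk₀ g))))

lemma range_extZeroEval (I : Ideal R) :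
    LinearMap.range (extZeroEval I Y) = Submodule.torsionBySet R Y I := by
  ext y
  refine ⟨?_, fun hy ↦ ?_⟩
  · rintro ⟨e, rfl⟩
    exact hom_apply_one_mem_torsionBySet (Abelian.Ext.linearEquiv₀ (R := R) e)
  · obtain ⟨f, rfl⟩ := exists_hom_apply_one_eq hy
    exact ⟨Abelian.Ext.mk₀ f, extZeroEval_mk₀ f⟩

lemma localExtZeroEval_injective : Function.Injective (localExtZeroEval J Y) := by
  refine (injective_iff_map_eq_zero (localExtZeroEval J Y).hom).2 fun x hx ↦ ?_
  obtain ⟨t, e, rfl⟩ := exists_toLocalExt_eq x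
  have he : extZeroEval (J ^ t) Y e = 0 := (localExtZeroEval_toLocalExt e).symm.trans hx
  rw [(map_eq_zero_iff _ (extZeroEval_injective _)).1 he, map_zero]

lemma range_localExtZeroEval :
    LinearMap.range (localExtZeroEval J Y).hom = J.primaryComponent Y := by
  ext y
  rw [Ideal.primaryComponent_mem]
  simp_rw [← range_extZeroEval]
  refine ⟨?_, ?_⟩
  · rintro ⟨x, rfl⟩
    obtain ⟨t, e, rfl⟩ := exists_toLocalExt_eq x
    exact ⟨t, e, (localExtZeroEval_toLocalExt e).symm⟩
  · rintro ⟨t, e, rfl⟩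
    exact ⟨toLocalExt J 0 Y t e, localExtZeroEval_toLocalExt e⟩

variable (J Y) in
/-- In degree zero, local cohomology is the submodule of `J`-power torsion elements. -/
def localExtZeroIso : localExt J 0 Y ≅ ModuleCat.of R (J.primaryComponent Y) :=
  (LinearEquiv.ofInjective _ localExtZeroEval_injective ≪≫ₗ
    LinearEquiv.ofEq _ _ range_localExtZeroEval).toModuleIso

end LocalExt

section PrimaryComponent

variable {R M N E : Type*} [CommRing R] [AddCommGroup M] [Module R M] [AddCommGroup N] [Module R N]
  [AddCommGroup E] [Module R E] {J : Ideal R}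

lemma exists_le_torsionBySet_of_fg {P : Submodule R E} (hP : P.FG) (h : P ≤ J.primaryComponent E) :
    ∃ c, P ≤ Submodule.torsionBySet R E ↑(J ^ c) := by
  have hdir : Directed (· ≤ ·) fun c ↦ Submodule.torsionBySet R E ↑(J ^ c) :=
    directed_of_isDirected_le fun i j hij ↦ Submodule.torsionBySet_le_torsionBySet_pow i j hij J
  obtain ⟨_, ⟨c, rfl⟩, hc⟩ := (CompleteLattice.isCompactElement_iff_le_of_directed_sSup_le _ _).1
    ((Submodule.fg_iff_compact P).1 hP) _ (Set.range_nonempty _) hdir.directedOn_range h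
  exact ⟨c, hc⟩

lemma exists_pow_inf_le_pow_mul [IsNoetherianRing R] (I J : Ideal R) (c : ℕ) :
    ∃ k, J ^ k ⊓ I ≤ J ^ c * I := by
  obtain ⟨k, hk⟩ := Ideal.exists_pow_inf_eq_pow_smul J (M := R) I
  refine ⟨k + c, ?_⟩
  have := hk (k + c) (Nat.le_add_right k c)
  simp only [smul_eq_mul, Ideal.mul_top, Nat.add_sub_cancel_left] at this
  exact this.trans_le (Ideal.mul_mono_right inf_le_right)

lemma exists_comp_eq_of_baer (hE : Module.Baer R E) {f : M →ₗ[R] N} {g : M →ₗ[R] E}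
    (h : LinearMap.ker f ≤ LinearMap.ker g) : ∃ g' : N →ₗ[R] E, g' ∘ₗ f = g := by
  obtain ⟨g', hg'⟩ := hE.extension_property ((LinearMap.ker f).liftQ f le_rfl)
    (LinearMap.ker_eq_bot.1 (Submodule.ker_liftQ_eq_bot _ _ _ le_rfl)) ((LinearMap.ker f).liftQ g h)
  exact ⟨g', LinearMap.ext fun x ↦ congr($hg' ((LinearMap.ker f).mkQ x))⟩

lemma exists_forall_mem_pow_eq_zero [IsNoetherianRing R] {I : Ideal R} {g : I →ₗ[R] E}
    (hg : LinearMap.range g ≤ J.primaryComponent E) :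
    ∃ k, ∀ x : I, (x : R) ∈ J ^ k → g x = 0 := by
  obtain ⟨c, hc⟩ := exists_le_torsionBySet_of_fg (Module.Finite.iff_fg.1 inferInstance) hg
  obtain ⟨k, hk⟩ := exists_pow_inf_le_pow_mul I J c
  refine ⟨k, fun x hx ↦ ?_⟩
  have hle : J ^ c • (⊤ : Submodule R I) ≤ LinearMap.ker g := Submodule.smul_le.2 fun r hr m _ ↦ by
    rw [LinearMap.mem_ker, map_smul]
    exact (Submodule.mem_torsionBySet_iff _ _).1 (hc ⟨m, rfl⟩) ⟨r, hr⟩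
  have hx' : (x : R) ∈ (J ^ c • (⊤ : Submodule R I)).map I.subtype := by
    rw [Submodule.map_smul'', Submodule.map_top, Submodule.range_subtype]
    exact hk ⟨hx, x.2⟩
  obtain ⟨y, hy, hyx⟩ := hx'
  exact Subtype.ext hyx ▸ hle hy

lemma baer_primaryComponent [IsNoetherianRing R] (hE : Module.Baer R E) :
    Module.Baer R (J.primaryComponent E) := by
  intro I g
  have hrange : LinearMap.range ((J.primaryComponent E).subtype ∘ₗ g) ≤ J.primaryComponent E := by
    rintro _ ⟨x, rfl⟩
    exact (g x).2
  obtain ⟨k, hk⟩ := exists_forall_mem_pow_eq_zero hrange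
  obtain ⟨g', hg'⟩ := exists_comp_eq_of_baer (f := (J ^ k).mkQ ∘ₗ I.subtype) hE fun x hx ↦
    hk x ((Submodule.Quotient.mk_eq_zero _).1 hx)
  have htorsion (r : R) : g' ((J ^ k).mkQ r) ∈ J.primaryComponent E := by
    rw [Ideal.primaryComponent_mem]
    refine ⟨k, (Submodule.mem_torsionBySet_iff _ _).2 fun a ↦ ?_⟩
    rw [← map_smul, ← map_smul, Submodule.mkQ_apply, (Submodule.Quotient.mk_eq_zero _).2, map_zero]
    exact Ideal.mul_mem_right r (J ^ k) a.2
  exact ⟨(g' ∘ₗ (J ^ k).mkQ).codRestrict _ htorsion, fun x hx ↦ Subtype.ext congr($hg' ⟨x, hx⟩)⟩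

lemma primaryComponent_eq_top_of_surjective {f : M →ₗ[R] N} (hf : Function.Surjective f)
    (hM : J.primaryComponent M = ⊤) : J.primaryComponent N = ⊤ := by
  refine Submodule.eq_top_iff'.2 fun y ↦ ?_
  obtain ⟨x, rfl⟩ := hf y
  exact Ideal.primaryComponent_map_mem J f ⟨x, hM ▸ Submodule.mem_top⟩

lemma primaryComponent_primaryComponent_eq_top :
    J.primaryComponent (J.primaryComponent M) = ⊤ := by
  refine Submodule.eq_top_iff'.2 fun ⟨x, hx⟩ ↦ ?_
  obtain ⟨c, hc⟩ := (J.primaryComponent_mem _ x).1 hx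
  refine (J.primaryComponent_mem _ _).2 ⟨c, (Submodule.mem_torsionBySet_iff _ _).2 fun a ↦ ?_⟩
  exact Subtype.ext ((Submodule.mem_torsionBySet_iff _ _).1 hc a)

end PrimaryComponent

section TorsionVanishing

universe u

variable {R : Type u} [CommRing R] {J : Ideal R}

lemma exists_shortExact_injective_torsion [IsNoetherianRing R] {N : ModuleCat.{u} R}
    (hN : J.primaryComponent N = ⊤) :
    ∃ S : ShortComplex (ModuleCat.{u} R), S.X₁ = N ∧ S.ShortExact ∧ Injective S.X₂ ∧
      J.primaryComponent S.X₂ = ⊤ := by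
  let E := Injective.under N
  let T := J.primaryComponent E
  let ι := (Injective.ι N).hom
  have hι : Function.Injective ι := (ModuleCat.mono_iff_injective _).1 inferInstance
  have hιT (x : N) : ι x ∈ T := Ideal.primaryComponent_map_mem J ι ⟨x, hN ▸ Submodule.mem_top⟩
  have : Injective (ModuleCat.of R E) := inferInstanceAs (Injective (Injective.under N))
  have : Module.Injective R E := Module.injective_module_of_injective_object R E
  have : Module.Injective R T := (baer_primaryComponent (Module.Baer.of_injective this)).injective
  let f : N →ₗ[R] T := ι.codRestrict T hιT
  have hf : Function.Injective f := fun x y h ↦ hι congr(($h : E))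
  exact ⟨ModuleCat.shortComplexOfCompEqZero f _ f.exact_map_mkQ_range.linearMap_comp_eq_zero, rfl,
    ModuleCat.shortComplex_shortExact _ f.exact_map_mkQ_range hf (Submodule.mkQ_surjective _),
    Module.injective_object_of_injective_module R T, primaryComponent_primaryComponent_eq_top⟩

lemma exists_powFactor_comp_eq {Y Z : ModuleCat.{u} R} {g : Y ⟶ Z} (hg : Function.Surjective g)
    (hY : J.primaryComponent Y = ⊤) {t : ℕ} (f : ModuleCat.of R (R ⧸ J ^ t) ⟶ Z) :
    ∃ t', ∃ ht : t ≤ t', ∃ f', powFactor J ht ≫ f = f' ≫ g := by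
  obtain ⟨y, hy⟩ := hg (f (1 : R ⧸ J ^ t))
  obtain ⟨c, hc⟩ := (J.primaryComponent_mem _ y).1 (hY ▸ Submodule.mem_top)
  obtain ⟨f', hf'⟩ := exists_hom_apply_one_eq
    (Submodule.torsionBySet_le_torsionBySet_pow c (max t c) (le_max_right t c) J hc)
  refine ⟨max t c, le_max_left t c, f', quotient_hom_ext ?_⟩
  exact hy.symm.trans (congrArg g hf').symm

lemma subsingleton_localExt_one {S : ShortComplex (ModuleCat.{u} R)} (hS : S.ShortExact)
    [Injective S.X₂] (h₂ : J.primaryComponent S.X₂ = ⊤) : Subsingleton (localExt J 1 S.X₁) := by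
  refine subsingleton_localExt_of_forall_exists_comp_eq_zero fun t e ↦ ?_
  obtain ⟨e₀, rfl⟩ := Abelian.Ext.covariant_sequence_exact₁ _ hS e
    (Abelian.Ext.eq_zero_of_injective _) (zero_add 1)
  obtain ⟨f, rfl⟩ := Abelian.Ext.homEquiv₀.symm.surjective e₀
  obtain ⟨t', ht, f', hf'⟩ := exists_powFactor_comp_eq
    ((ModuleCat.epi_iff_surjective _).1 hS.epi_g) h₂ f
  refine ⟨t', ht, ?_⟩
  rw [Abelian.Ext.homEquiv₀_symm_apply, Abelian.Ext.mk₀_comp_mk₀_assoc, hf',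
    ← Abelian.Ext.mk₀_comp_mk₀_assoc, hS.comp_extClass, Abelian.Ext.comp_zero]

lemma subsingleton_localExt_succ_of_primaryComponent_eq_top [IsNoetherianRing R]
    {N : ModuleCat.{u} R} (hN : J.primaryComponent N = ⊤) (n : ℕ) :
    Subsingleton (localExt J (n + 1) N) := by
  induction n generalizing N with
  | zero =>
    obtain ⟨S, rfl, hS, _, h₂⟩ := exists_shortExact_injective_torsion hN
    exact subsingleton_localExt_one hS h₂
  | succ n ih =>
    obtain ⟨S, rfl, hS, _, h₂⟩ := exists_shortExact_injective_torsion hN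
    have hExt (i t) : Subsingleton (Abelian.Ext (ModuleCat.of R (R ⧸ J ^ t)) S.X₂ (i + 1)) :=
      subsingleton_of_forall_eq 0 Abelian.Ext.eq_zero_of_injective
    have := ih (primaryComponent_eq_top_of_surjective (f := S.g.hom)
      ((ModuleCat.epi_iff_surjective _).1 hS.epi_g) h₂)
    exact (localExtShiftIso hS (hExt n) (hExt (n + 1))).symm.toLinearEquiv.injective.subsingleton

end TorsionVanishing

section Grade

universe u

variable {R : Type u} [CommRing R] (J : Ideal R)

/-- `Ext^i(R ⧸ J ^ t, M) = 0` for all `t` and all `i < m`. For finite modules over a Noetherian ring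
this is the condition that the grade of `J` on `M` is at least `m`. -/
def GradeAtLeast (m : ℕ) (M : Type u) [AddCommGroup M] [Module R M] : Prop :=
  ∀ t, ∀ i < m, Subsingleton (Abelian.Ext (ModuleCat.of R (R ⧸ J ^ t)) (ModuleCat.of R M) i)

variable {J} {m : ℕ} {M M' : Type u} [AddCommGroup M] [Module R M] [AddCommGroup M'] [Module R M']

lemma GradeAtLeast.mono {m' : ℕ} (hM : GradeAtLeast J m M) (h : m' ≤ m) : GradeAtLeast J m' M :=
  fun t i hi ↦ hM t i (hi.trans_le h)

lemma GradeAtLeast.subsingleton_localExt (hM : GradeAtLeast J m M) {i : ℕ} (hi : i < m) :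
    Subsingleton (localExt J i (ModuleCat.of R M)) :=
  subsingleton_localExt_of_forall_exists_comp_eq_zero fun t e ↦
    ⟨t, le_rfl, by rw [(hM t i hi).elim e 0, Abelian.Ext.comp_zero]⟩

lemma GradeAtLeast.of_eq_ker {P : Submodule R M} {g : M →ₗ[R] M'} (hP : P = LinearMap.ker g)
    (hg : Function.Surjective g) (hM : GradeAtLeast J (m + 1) M) (hM' : GradeAtLeast J m M') :
    GradeAtLeast J (m + 1) P := by
  subst hP
  have hS := LinearMap.shortExact_shortComplexKer hg
  rintro t (_ | i) hi
  · have := hM t 0 hi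
    have := hS.mono_f
    exact (Abelian.Ext.postcomp_mk₀_injective_of_mono _ g.shortComplexKer.f).subsingleton
  · refine subsingleton_of_forall_eq 0 fun e ↦ ?_
    obtain ⟨e', rfl⟩ := Abelian.Ext.covariant_sequence_exact₁ _ hS e ((hM t _ hi).elim _ _) rfl
    rw [(hM' t i (Nat.lt_of_succ_lt_succ hi)).elim e' 0, Abelian.Ext.zero_comp]

lemma GradeAtLeast.nonempty_localExt_iso {P : Submodule R M} {g : M →ₗ[R] M'}
    (hP : P = LinearMap.ker g) (hg : Function.Surjective g) {i : ℕ}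
    (hM : GradeAtLeast J (i + 2) M) :
    Nonempty (localExt J i (ModuleCat.of R M') ≅ localExt J (i + 1) (ModuleCat.of R P)) := by
  subst hP
  exact ⟨localExtShiftIso (S := g.shortComplexKer) (LinearMap.shortExact_shortComplexKer hg)
    (fun t ↦ hM t i (by lia)) (fun t ↦ hM t (i + 1) (by lia))⟩

lemma gradeAtLeast_of_subsingleton [Subsingleton M] : GradeAtLeast J m M := by
  refine fun t i _ ↦ subsingleton_of_forall_eq 0 fun e ↦ ?_
  have hid : 𝟙 (ModuleCat.of R M) = 0 := (ModuleCat.isZero_of_subsingleton _).eq_of_src _ _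
  rw [← e.comp_mk₀_id, hid, Abelian.Ext.mk₀_zero, Abelian.Ext.comp_zero]

open RingTheory.Sequence

lemma gradeAtLeast_length_of_isWeaklyRegular [IsNoetherianRing R] [Module.Free R M]
    [Module.Finite R M] {rs : List R} (hrs : IsWeaklyRegular R rs) (hrsJ : ∀ r ∈ rs, r ∈ J)
    (hJ : J ≠ ⊤) : GradeAtLeast J rs.length M := by
  rcases subsingleton_or_nontrivial M with hM | hM
  · exact gradeAtLeast_of_subsingleton
  have hJM : J • (⊤ : Submodule R M) ≠ ⊤ :=
    ((Module.FaithfullyFlat.iff_flat_and_proper_ideal R M).1 inferInstance).2 J hJ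
  have hreg : IsWeaklyRegular M rs :=
    ((TensorProduct.rid R M).isWeaklyRegular_congr rs).1 hrs.isWeaklyRegular_lTensor
  have hrsM : Ideal.ofList rs • (⊤ : Submodule R M) ≤ J • ⊤ :=
    Submodule.smul_mono_left (Ideal.span_le.2 hrsJ)
  refine fun t ↦ ModuleCat.subsingleton_ext_of_exists_isRegular J _ ?_ _ hJM.lt_top rs hrsJ
    ⟨hreg, (hrsM.trans_lt hJM.lt_top).ne'⟩
  rw [Module.support_eq_zeroLocus, PrimeSpectrum.zeroLocus_subset_zeroLocus_iff]
  exact fun x hx ↦ ⟨t, Ideal.annihilator_quotient.ge (Ideal.pow_mem_pow hx t)⟩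

end Grade

section Variables

universe u

open RingTheory.Sequence MvPolynomial

variable {σ A : Type*} [CommRing A]

lemma mem_span_X_image_of_X_mul_mem {s : Set σ} {i : σ} (hi : i ∉ s) {f : MvPolynomial σ A}
    (hf : X i * f ∈ Ideal.span (X '' s)) : f ∈ Ideal.span (X '' s : Set (MvPolynomial σ A)) := by
  rw [mem_ideal_span_X_image] at hf ⊢
  intro m hm
  obtain ⟨j, hj, hmj⟩ := hf (m + Finsupp.single i 1) <| by
    rwa [mul_comm, mem_support_iff, coeff_mul_X, ← mem_support_iff]
  have hij : i ≠ j := by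
    rintro rfl
    exact hi hj
  exact ⟨j, hj, by simpa [Finsupp.single_apply, hij] using hmj⟩

lemma isWeaklyRegular_map_X {l : List σ} (hl : l.Nodup) :
    IsWeaklyRegular (MvPolynomial σ A) (l.map (X (R := A))) := by
  refine (isWeaklyRegular_iff _ _).2 fun i hi ↦ ?_
  have hspan : Ideal.ofList ((l.map (X (R := A))).take i) • (⊤ : Ideal (MvPolynomial σ A)) =
      Ideal.span (X '' {x | x ∈ l.take i}) := by
    rw [smul_eq_mul, Ideal.mul_top, Ideal.ofList, ← List.map_take]
    congr 1
    ext
    simp only [Set.mem_ofPred_eq, List.mem_map, Set.mem_image]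
  rw [isSMulRegular_quotient_iff_mem_of_smul_mem, hspan, List.getElem_map]
  refine fun f hf ↦ mem_span_X_image_of_X_mul_mem (fun hmem ↦ ?_) hf
  obtain ⟨j, hj, hji⟩ := List.mem_take_iff_getElem.1 hmem
  have := hl.getElem_inj_iff.1 hji
  lia

variable (σ A) in
lemma idealOfVars_ne_top [Nontrivial A] : idealOfVars σ A ≠ ⊤ := by
  have hker : idealOfVars σ A ≤ RingHom.ker (constantCoeff (R := A)) :=
    Ideal.span_le.2 (Set.range_subset_iff.2 (constantCoeff_X A))
  exact ne_top_of_le_ne_top (RingHom.ker_ne_top _) hker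

lemma gradeAtLeast_idealOfVars {σ A M : Type u} [Fintype σ] [CommRing A] [IsNoetherianRing A]
    [Nontrivial A] [AddCommGroup M] [Module (MvPolynomial σ A) M]
    [Module.Free (MvPolynomial σ A) M] [Module.Finite (MvPolynomial σ A) M] :
    GradeAtLeast (idealOfVars σ A) (Fintype.card σ) M := by
  have hmem : ∀ r ∈ Finset.univ.toList.map X, r ∈ idealOfVars σ A :=
    List.forall_mem_map.2 fun i _ ↦ Ideal.subset_span (Set.mem_range_self i)
  have h := gradeAtLeast_length_of_isWeaklyRegular (M := M)
    (isWeaklyRegular_map_X Finset.univ.nodup_toList) hmem (idealOfVars_ne_top σ A)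
  rwa [List.length_map, Finset.length_toList] at h

end Variables

section Syzygies

universe u

variable {R : Type u} [CommRing R] {J : Ideal R} {m : ℕ} {L : ℕ → Type u}
  [∀ i, AddCommGroup (L i)] [∀ i, Module R (L i)] {d : ∀ i, L (i + 1) →ₗ[R] L i}

lemma gradeAtLeast_range (hL : ∀ i, GradeAtLeast J m (L i))
    (hd : ∀ i, LinearMap.range (d (i + 1)) = LinearMap.ker (d i)) {j k : ℕ} (hj : j ≤ m)
    (hjk : j ≤ k + 1) : GradeAtLeast J j (LinearMap.range (d k)) := by
  induction j generalizing k with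
  | zero => exact fun t i hi ↦ absurd hi i.not_lt_zero
  | succ j ih =>
    have hLk := (hL k).mono hj
    cases k with
    | zero =>
      obtain rfl : j = 0 := by lia
      exact .of_eq_ker (Submodule.ker_mkQ _).symm (Submodule.mkQ_surjective _) hLk
        fun t i hi ↦ absurd hi i.not_lt_zero
    | succ k =>
      exact .of_eq_ker ((hd k).trans (LinearMap.ker_rangeRestrict _).symm)
        (d k).surjective_rangeRestrict hLk (ih (by lia) (by lia))

variable {N : Type u} [AddCommGroup N] [Module R N] {aug : L 0 →ₗ[R] N}

lemma nonempty_localExt_range_iso (hL : ∀ i, GradeAtLeast J m (L i))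
    (haug : Function.Surjective aug) (hd₀ : LinearMap.range (d 0) = LinearMap.ker aug)
    (hd : ∀ i, LinearMap.range (d (i + 1)) = LinearMap.ker (d i)) {i k : ℕ} (h : i + k + 1 < m) :
    Nonempty (localExt J i (ModuleCat.of R N) ≅
      localExt J (i + k + 1) (ModuleCat.of R (LinearMap.range (d k)))) := by
  induction k with
  | zero => exact ((hL 0).mono h).nonempty_localExt_iso hd₀ haug
  | succ k ih =>
    obtain ⟨e⟩ := ih (by lia)
    obtain ⟨e'⟩ := ((hL (k + 1)).mono h).nonempty_localExt_iso
      ((hd k).trans (LinearMap.ker_rangeRestrict _).symm) (d k).surjective_rangeRestrict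
    exact ⟨e ≪≫ e'⟩

theorem syzygy_bundle_cohomology_general [IsNoetherianRing R] (hN : J.primaryComponent N = ⊤)
    (hL : ∀ i, GradeAtLeast J m (L i)) (haug : Function.Surjective aug)
    (hd₀ : LinearMap.range (d 0) = LinearMap.ker aug)
    (hd : ∀ i, LinearMap.range (d (i + 1)) = LinearMap.ker (d i)) {k : ℕ} (hk : k + 1 < m) :
    Nonempty ((localCohomology J (k + 1)).obj (ModuleCat.of R (LinearMap.range (d k))) ≅
      ModuleCat.of R N) ∧
    ∀ i, i + 1 < m → i ≠ k →
      Subsingleton ((localCohomology J (i + 1)).obj (ModuleCat.of R (LinearMap.range (d k)))) := by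
  refine ⟨?_, fun i hi hik ↦ ?_⟩
  · obtain ⟨e⟩ := nonempty_localExt_range_iso hL haug hd₀ hd (i := 0) (k := k) (by lia)
    rw [Nat.zero_add] at e
    exact ⟨localCohomologyIsoLocalExt J k _ ≪≫ e.symm ≪≫ localExtZeroIso J _ ≪≫
      ((LinearEquiv.ofEq _ _ hN).trans Submodule.topEquiv).toModuleIso⟩
  suffices Subsingleton (localExt J (i + 1) (ModuleCat.of R (LinearMap.range (d k)))) from
    (localCohomologyIsoLocalExt J i _).toLinearEquiv.injective.subsingleton
  rcases hik.lt_or_gt with hlt | hgt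
  · exact (gradeAtLeast_range hL hd (j := k + 1) hk.le le_rfl).subsingleton_localExt (by lia)
  · obtain ⟨a, rfl⟩ := Nat.exists_eq_add_of_lt hgt
    obtain ⟨e⟩ := nonempty_localExt_range_iso hL haug hd₀ hd (i := a + 1) (k := k) (by lia)
    have := subsingleton_localExt_succ_of_primaryComponent_eq_top
      (N := ModuleCat.of R N) hN a
    rw [show k + a + 1 + 1 = a + 1 + k + 1 by lia]
    exact e.symm.toLinearEquiv.injective.subsingleton

end Syzygies

section GradedModules

variable {K n} {N : Type} [AddCommGroup N] [Module (PolyS K n) N]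

lemma IsGradedFiniteLength.primaryComponent_eq_top (hN : IsGradedFiniteLength K n N) :
    (irrel K n).primaryComponent N = ⊤ := by
  obtain ⟨c, hc⟩ := hN.2
  refine Submodule.eq_top_iff'.2 fun x ↦ (Ideal.primaryComponent_mem _ _ x).2 ⟨c, ?_⟩
  exact (Submodule.mem_torsionBySet_iff _ _).2 fun r ↦ Module.mem_annihilator.1 (hc r.2) x

lemma MinimalResolution.gradeAtLeast (res : MinimalResolution K n N) (i : ℕ) :
    GradeAtLeast (irrel K n) (n + 1) (res.L i) := by
  have := res.free i
  have := res.finite i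
  have h := gradeAtLeast_idealOfVars (σ := Fin (n + 1)) (A := K) (M := res.L i)
  rwa [Fintype.card_fin] at h

end GradedModules

/-- For a finite length graded `S`-module `N` with `k`-th syzygy
bundle `P_k(N)` (the sheafification of `im(L_{k+1} → L_k)` in a minimal free
resolution), `H^k_*(P_k(N)) = N` and `H^i_*(P_k(N)) = 0` for all `1 ≤ i ≤ n-1`,
`i ≠ k`. -/
theorem syzygy_bundle_cohomology
    (K : Type) [Field K] (n : ℕ)
    (N : Type) [AddCommGroup N] [Module (PolyS K n) N]
    (hNfl : IsGradedFiniteLength K n N)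
    (res : MinimalResolution K n N)
    (k : ℕ) (hk1 : 1 ≤ k) (hk2 : k ≤ n - 1) :
    Nonempty (Hstar K n k ↥(LinearMap.range (res.d k)) ≅ ModuleCat.of (PolyS K n) N) ∧
    (∀ i : ℕ, 1 ≤ i → i ≤ n - 1 → i ≠ k →
      Subsingleton (Hstar K n i ↥(LinearMap.range (res.d k)))) :=
  have ⟨hiso, hvanish⟩ := syzygy_bundle_cohomology_general hNfl.primaryComponent_eq_top
    res.gradeAtLeast res.aug_surjective res.exact0 res.exact (k := k) (by lia)
  ⟨hiso, fun i _ hi hik ↦ hvanish i (by lia) hik⟩
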